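/- The depth function f(k) = depth(S/I^k) has exactly n strict local maxima: for every even integer k with 2 ≤ k ≤ 2n one has depth(S/I^k) > depth(S/I^{k-1}) and depth(S/I^k) > depth(S/I^{k+1}), and these are the only strict local maxima of f. -/

import Mathlib

open MvPolynomial

noncomputable section

/-- The depth of a module `M` with respect to an ideal `J`: the supremum of the lengths of
`M`-regular sequences consisting of elements of `J`. -/
noncomputable def depthWrt {R : Type*} [CommRing R] (J : Ideal R)
    (M : Type*) [AddCommGroup M] [Module R M] : ℕ∞ :=
  sSup {k : ℕ∞ | ∃ rs : List R, (rs.length : ℕ∞) = k ∧ (∀ r ∈ rs, r ∈ J) ∧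
    RingTheory.Sequence.IsRegular M rs}

/-- The type of the `2n+4` variables `a, b, c, d, x₁, y₁, …, xₙ, yₙ`. -/
abbrev Vars (n : ℕ) : Type := Fin 4 ⊕ Fin n ⊕ Fin n

variable (K : Type*) [Field K] (n : ℕ)

/-- The variable `a`. -/
def va : MvPolynomial (Vars n) K := X (Sum.inl 0)
/-- The variable `b`. -/
def vb : MvPolynomial (Vars n) K := X (Sum.inl 1)
/-- The variable `c`. -/
def vc : MvPolynomial (Vars n) K := X (Sum.inl 2)
/-- The variable `d`. -/
def vd : MvPolynomial (Vars n) K := X (Sum.inl 3)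
/-- The variable `xᵢ` (for `i = 0, …, n-1` corresponding to `x₁, …, xₙ`). -/
def vx (i : Fin n) : MvPolynomial (Vars n) K := X (Sum.inr (Sum.inl i))
/-- The variable `yᵢ` (for `i = 0, …, n-1` corresponding to `y₁, …, yₙ`). -/
def vy (i : Fin n) : MvPolynomial (Vars n) K := X (Sum.inr (Sum.inr i))

/-- The monomial ideal
`I = (a⁶, a⁵b, ab⁵, b⁶, a⁴b⁴c, a⁴b⁴d, a⁴x₁y₁², b⁴x₁²y₁, …, a⁴xₙyₙ², b⁴xₙ²yₙ)`. -/
def idealI : Ideal (MvPolynomial (Vars n) K) :=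
  Ideal.span
    ({va K n ^ 6, va K n ^ 5 * vb K n, va K n * vb K n ^ 5, vb K n ^ 6,
      va K n ^ 4 * vb K n ^ 4 * vc K n, va K n ^ 4 * vb K n ^ 4 * vd K n} ∪
     Set.range (fun i => va K n ^ 4 * vx K n i * vy K n i ^ 2) ∪
     Set.range (fun i => vb K n ^ 4 * vx K n i ^ 2 * vy K n i))

/-- The graded maximal ideal `m = (a,b,c,d,x₁,y₁,…,xₙ,yₙ)`. -/
def mMax : Ideal (MvPolynomial (Vars n) K) := Ideal.span (Set.range X)

/-- The depth function `f(k) = depth(S/Iᵏ)`. -/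
def depthFun (k : ℕ) : ℕ∞ :=
  depthWrt (mMax K n) (MvPolynomial (Vars n) K ⧸ (idealI K n) ^ k)

/-- combinatorial membership predicate -/
def Mem0 (n k α β γ : ℕ) (x y : Fin n → ℕ) : Prop :=
  ∃ n1 n2 n3 n4 p : ℕ, ∃ r s : Fin n → ℕ,
    n1 + n2 + n3 + n4 + p + ∑ i, r i + ∑ i, s i = k ∧
    6 * n1 + 5 * n2 + n3 + 4 * p + 4 * ∑ i, r i ≤ α ∧
    n2 + 5 * n3 + 6 * n4 + 4 * p + 4 * ∑ i, s i ≤ β ∧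
    p ≤ γ ∧ ∀ i, r i + 2 * s i ≤ x i ∧ 2 * r i + s i ≤ y i

def MemU (n k : ℕ) (u : Vars n →₀ ℕ) : Prop :=
  Mem0 n k (u (Sum.inl 0)) (u (Sum.inl 1)) (u (Sum.inl 2) + u (Sum.inl 3))
    (fun i => u (Sum.inr (Sum.inl i))) (fun i => u (Sum.inr (Sum.inr i)))

theorem Mem0.mono {n k α β γ α' β' γ' : ℕ} {x y x' y' : Fin n → ℕ}
    (h : Mem0 n k α β γ x y) (ha : α ≤ α') (hb : β ≤ β') (hc : γ ≤ γ')
    (hx : ∀ i, x i ≤ x' i) (hy : ∀ i, y i ≤ y' i) : Mem0 n k α' β' γ' x' y' := by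
  obtain ⟨n1, n2, n3, n4, p, r, s, h1, h2, h3, h4, h5⟩ := h
  exact ⟨n1, n2, n3, n4, p, r, s, h1, by omega, by omega, by omega,
    fun i => ⟨(h5 i).1.trans (hx i), (h5 i).2.trans (hy i)⟩⟩

theorem MemU.mono {n k : ℕ} {u v : Vars n →₀ ℕ} (h : MemU n k u) (huv : u ≤ v) : MemU n k v :=
  Mem0.mono h (huv _) (huv _) (Nat.add_le_add (huv _) (huv _)) (fun _ => huv _) (fun _ => huv _)

theorem MemU.add {n k l : ℕ} {u v : Vars n →₀ ℕ} (h : MemU n k u) (h' : MemU n l v) :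
    MemU n (k + l) (u + v) := by
  obtain ⟨n1, n2, n3, n4, p, r, s, h1, h2, h3, h4, h5⟩ := h
  obtain ⟨n1', n2', n3', n4', p', r', s', h1', h2', h3', h4', h5'⟩ := h'
  refine ⟨n1 + n1', n2 + n2', n3 + n3', n4 + n4', p + p', r + r', s + s', ?_, ?_, ?_, ?_, ?_⟩
  · simp only [Pi.add_apply, Finset.sum_add_distrib]; omega
  · simp only [Pi.add_apply, Finset.sum_add_distrib, Finsupp.add_apply]; omega
  · simp only [Pi.add_apply, Finset.sum_add_distrib, Finsupp.add_apply]; omega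
  · simp only [Finsupp.add_apply]; omega
  · intro i
    have a1 := h5 i
    have a2 := h5' i
    simp only [Pi.add_apply, Finsupp.add_apply] at a1 a2 ⊢; omega

theorem sum_single_one {n : ℕ} (i : Fin n) : ∑ j, (Pi.single i 1 : Fin n → ℕ) j = 1 := by
  simp

theorem exists_pred {n : ℕ} (r : Fin n → ℕ) (h : 0 < ∑ i, r i) :
    ∃ i, ∃ r' : Fin n → ℕ, r = r' + Pi.single i 1 := by
  obtain ⟨i, -, hi⟩ := Finset.exists_ne_zero_of_sum_ne_zero (Nat.pos_iff_ne_zero.mp h)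
  refine ⟨i, r - Pi.single i 1, ?_⟩
  funext j
  by_cases hj : j = i
  · subst hj; simp; omega
  · simp [hj]

/-- the exponents of the generators -/
inductive IsGen (n : ℕ) : (Vars n →₀ ℕ) → Prop
  | g1 : IsGen n (Finsupp.single (Sum.inl 0) 6)
  | g2 : IsGen n (Finsupp.single (Sum.inl 0) 5 + Finsupp.single (Sum.inl 1) 1)
  | g3 : IsGen n (Finsupp.single (Sum.inl 0) 1 + Finsupp.single (Sum.inl 1) 5)
  | g4 : IsGen n (Finsupp.single (Sum.inl 1) 6)
  | gc : IsGen n (Finsupp.single (Sum.inl 0) 4 + Finsupp.single (Sum.inl 1) 4 +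
      Finsupp.single (Sum.inl 2) 1)
  | gd : IsGen n (Finsupp.single (Sum.inl 0) 4 + Finsupp.single (Sum.inl 1) 4 +
      Finsupp.single (Sum.inl 3) 1)
  | gw (i : Fin n) : IsGen n (Finsupp.single (Sum.inl 0) 4 +
      Finsupp.single (Sum.inr (Sum.inl i)) 1 + Finsupp.single (Sum.inr (Sum.inr i)) 2)
  | gz (i : Fin n) : IsGen n (Finsupp.single (Sum.inl 1) 4 +
      Finsupp.single (Sum.inr (Sum.inl i)) 2 + Finsupp.single (Sum.inr (Sum.inr i)) 1)

theorem idealI_eq : idealI K n = Ideal.span ((fun u => monomial u (1 : K)) '' {u | IsGen n u}) := by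
  unfold idealI
  congr 1
  ext f
  simp only [va, vb, vc, vd, vx, vy, X, monomial_pow, monomial_mul, mul_one, one_pow,
    Finsupp.smul_single, smul_eq_mul]
  constructor
  · rintro ((h | h) | h)
    · rcases h with rfl | rfl | rfl | rfl | rfl | rfl
      exacts [⟨_, .g1, rfl⟩, ⟨_, .g2, rfl⟩, ⟨_, .g3, rfl⟩, ⟨_, .g4, rfl⟩, ⟨_, .gc, rfl⟩, ⟨_, .gd, rfl⟩]
    · obtain ⟨i, rfl⟩ := h
      exact ⟨_, .gw i, rfl⟩
    · obtain ⟨i, rfl⟩ := h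
      exact ⟨_, .gz i, rfl⟩
  · rintro ⟨u, hu, rfl⟩
    cases hu with
    | gw i => exact Or.inl (Or.inr ⟨i, rfl⟩)
    | gz i => exact Or.inr ⟨i, rfl⟩
    | _ => left; left; simp

theorem IsGen.memU {n : ℕ} {u : Vars n →₀ ℕ} (h : IsGen n u) : MemU n 1 u := by
  cases h with
  | g1 => exact ⟨1, 0, 0, 0, 0, 0, 0, by simp⟩
  | g2 => exact ⟨0, 1, 0, 0, 0, 0, 0, by simp⟩
  | g3 => exact ⟨0, 0, 1, 0, 0, 0, 0, by simp⟩
  | g4 => exact ⟨0, 0, 0, 1, 0, 0, 0, by simp⟩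
  | gc => exact ⟨0, 0, 0, 0, 1, 0, 0, by simp⟩
  | gd => exact ⟨0, 0, 0, 0, 1, 0, 0, by simp⟩
  | gw i =>
    refine ⟨0, 0, 0, 0, 0, Pi.single i 1, 0, by simp, by simp, by simp, by simp, fun j => ?_⟩
    by_cases hj : j = i
    · subst hj; simp
    · simp [hj]
  | gz i =>
    refine ⟨0, 0, 0, 0, 0, 0, Pi.single i 1, by simp, by simp, by simp, by simp, fun j => ?_⟩
    by_cases hj : j = i
    · subst hj; simp
    · simp [hj]

theorem le_of_coords {n : ℕ} {u v : Vars n →₀ ℕ} (h0 : u (Sum.inl 0) ≤ v (Sum.inl 0))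
    (h1 : u (Sum.inl 1) ≤ v (Sum.inl 1)) (h2 : u (Sum.inl 2) ≤ v (Sum.inl 2))
    (h3 : u (Sum.inl 3) ≤ v (Sum.inl 3))
    (hx : ∀ i, u (Sum.inr (Sum.inl i)) ≤ v (Sum.inr (Sum.inl i)))
    (hy : ∀ i, u (Sum.inr (Sum.inr i)) ≤ v (Sum.inr (Sum.inr i))) : u ≤ v := by
  intro t
  rcases t with t | t | t
  · fin_cases t
    exacts [h0, h1, h2, h3]
  · exact hx t
  · exact hy t

theorem MemU.exists_gen {n k : ℕ} {u : Vars n →₀ ℕ} (h : MemU n (k + 1) u) :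
    ∃ e, IsGen n e ∧ e ≤ u ∧ MemU n k (u - e) := by
  obtain ⟨n1, n2, n3, n4, p, r, s, h1, h2, h3, h4, h5⟩ := h
  by_cases c1 : 0 < n1
  · refine ⟨_, .g1, le_of_coords ?_ ?_ ?_ ?_ ?_ ?_, n1 - 1, n2, n3, n4, p, r, s, ?_, ?_, ?_, ?_, ?_⟩ <;>
      (try simp) <;> first | omega | assumption
  by_cases c2 : 0 < n2
  · refine ⟨_, .g2, le_of_coords ?_ ?_ ?_ ?_ ?_ ?_, n1, n2 - 1, n3, n4, p, r, s, ?_, ?_, ?_, ?_, ?_⟩ <;>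
      (try simp) <;> first | omega | assumption
  by_cases c3 : 0 < n3
  · refine ⟨_, .g3, le_of_coords ?_ ?_ ?_ ?_ ?_ ?_, n1, n2, n3 - 1, n4, p, r, s, ?_, ?_, ?_, ?_, ?_⟩ <;>
      (try simp) <;> first | omega | assumption
  by_cases c4 : 0 < n4
  · refine ⟨_, .g4, le_of_coords ?_ ?_ ?_ ?_ ?_ ?_, n1, n2, n3, n4 - 1, p, r, s, ?_, ?_, ?_, ?_, ?_⟩ <;>
      (try simp) <;> first | omega | assumption
  by_cases c5 : 0 < p
  · by_cases c6 : 0 < u (Sum.inl 2)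
    · refine ⟨_, .gc, le_of_coords ?_ ?_ ?_ ?_ ?_ ?_, n1, n2, n3, n4, p - 1, r, s, ?_, ?_, ?_, ?_, ?_⟩ <;>
        (try simp) <;> first | omega | assumption
    · refine ⟨_, .gd, le_of_coords ?_ ?_ ?_ ?_ ?_ ?_, n1, n2, n3, n4, p - 1, r, s, ?_, ?_, ?_, ?_, ?_⟩ <;>
        (try simp) <;> first | omega | assumption
  by_cases c6 : 0 < ∑ i, r i
  · obtain ⟨i, r', rfl⟩ := exists_pred r c6
    simp only [Pi.add_apply, Finset.sum_add_distrib, sum_single_one] at h1 h2 h3 h5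
    refine ⟨_, .gw i, le_of_coords ?_ ?_ ?_ ?_ ?_ ?_, n1, n2, n3, n4, p, r', s, by omega, ?_, ?_, ?_, ?_⟩
    · simp; omega
    · simp
    · simp
    · simp
    · intro j
      have := h5 j
      by_cases hj : j = i
      · subst hj; simp at this ⊢; omega
      · simp [Ne.symm hj]
    · intro j
      have := h5 j
      by_cases hj : j = i
      · subst hj; simp at this ⊢; omega
      · simp [Ne.symm hj]
    · simp; omega
    · simp; omega
    · simp; omega
    · intro j
      have := h5 j
      by_cases hj : j = i
      · subst hj; simp at this ⊢; omega
      · simp [hj, Ne.symm hj] at this ⊢; omega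
  · have c7 : 0 < ∑ i, s i := by omega
    obtain ⟨i, s', rfl⟩ := exists_pred s c7
    simp only [Pi.add_apply, Finset.sum_add_distrib, sum_single_one] at h1 h2 h3 h5
    refine ⟨_, .gz i, le_of_coords ?_ ?_ ?_ ?_ ?_ ?_, n1, n2, n3, n4, p, r, s', by omega, ?_, ?_, ?_, ?_⟩
    · simp
    · simp; omega
    · simp
    · simp
    · intro j
      have := h5 j
      by_cases hj : j = i
      · subst hj; simp at this ⊢; omega
      · simp [Ne.symm hj]
    · intro j
      have := h5 j
      by_cases hj : j = i
      · subst hj; simp at this ⊢; omega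
      · simp [Ne.symm hj]
    · simp; omega
    · simp; omega
    · simp; omega
    · intro j
      have := h5 j
      by_cases hj : j = i
      · subst hj; simp at this ⊢; omega
      · simp [hj, Ne.symm hj] at this ⊢; omega

theorem idealI_pow_eq (k : ℕ) :
    idealI K n ^ k = Ideal.span ((fun u => monomial u (1 : K)) '' {u | MemU n k u}) := by
  induction k with
  | zero =>
    rw [pow_zero, Ideal.one_eq_top, eq_comm, Ideal.eq_top_iff_one]
    exact Ideal.subset_span ⟨0, ⟨0, 0, 0, 0, 0, 0, 0, by simp⟩, rfl⟩
  | succ k ih =>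
    rw [pow_succ, ih, idealI_eq, Ideal.span_mul_span']
    apply le_antisymm
    · rw [Ideal.span_le]
      rintro _ ⟨_, ⟨u, hu, rfl⟩, _, ⟨v, hv, rfl⟩, rfl⟩
      refine Ideal.subset_span ⟨u + v, MemU.add hu hv.memU, ?_⟩
      simp [monomial_mul]
    · rw [Ideal.span_le]
      rintro _ ⟨u, hu, rfl⟩
      obtain ⟨e, he, hle, hm⟩ := MemU.exists_gen hu
      refine Ideal.subset_span ⟨_, ⟨u - e, hm, rfl⟩, _, ⟨e, he, rfl⟩, ?_⟩
      simp [monomial_mul, tsub_add_cancel_of_le hle]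

theorem mem_pow_iff (k : ℕ) (f : MvPolynomial (Vars n) K) :
    f ∈ idealI K n ^ k ↔ ∀ u ∈ f.support, MemU n k u := by
  rw [idealI_pow_eq, mem_ideal_span_monomial_image]
  exact forall₂_congr fun u _ => ⟨fun ⟨v, hv, h⟩ => MemU.mono hv h, fun h => ⟨u, h, le_rfl⟩⟩
theorem Mem0.of_c {n k α β γ : ℕ} {x y : Fin n → ℕ} (h : Mem0 n k α β (γ + 1) x y)
    (h0 : ¬ Mem0 n k α β γ x y) : ∃ r s : Fin n → ℕ, ∑ i, r i + ∑ i, s i + 1 = k ∧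
      α = 4 * ∑ i, r i + 4 ∧ β = 4 * ∑ i, s i + 4 ∧
      ∀ i, r i + 2 * s i ≤ x i ∧ 2 * r i + s i ≤ y i := by
  obtain ⟨n1, n2, n3, n4, p, r, s, h1, h2, h3, h4, h5⟩ := h
  by_cases q1 : p ≤ γ
  · exact (h0 ⟨n1, n2, n3, n4, p, r, s, h1, h2, h3, q1, h5⟩).elim
  by_cases q2 : 2 ≤ p
  · exact (h0 ⟨n1 + 1, n2, n3, n4 + 1, p - 2, r, s, by omega, by omega, by omega, by omega, h5⟩).elim
  by_cases q3 : 1 ≤ n1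
  · exact (h0 ⟨n1 - 1, n2 + 2, n3, n4, p - 1, r, s, by omega, by omega, by omega, by omega, h5⟩).elim
  by_cases q4 : 1 ≤ n2
  · exact (h0 ⟨n1 + 1, n2 - 1, n3 + 1, n4, p - 1, r, s, by omega, by omega, by omega, by omega, h5⟩).elim
  by_cases q5 : 1 ≤ n4
  · exact (h0 ⟨n1, n2, n3 + 2, n4 - 1, p - 1, r, s, by omega, by omega, by omega, by omega, h5⟩).elim
  by_cases q6 : 1 ≤ n3
  · exact (h0 ⟨n1, n2 + 1, n3 - 1, n4 + 1, p - 1, r, s, by omega, by omega, by omega, by omega, h5⟩).elim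
  by_cases q7 : 4 * ∑ i, r i + 5 ≤ α
  · exact (h0 ⟨0, 1, 0, 0, 0, r, s, by omega, by omega, by omega, by omega, h5⟩).elim
  by_cases q8 : 4 * ∑ i, s i + 5 ≤ β
  · exact (h0 ⟨0, 0, 1, 0, 0, r, s, by omega, by omega, by omega, by omega, h5⟩).elim
  exact ⟨r, s, by omega, by omega, by omega, h5⟩

theorem sum_update_add {n : ℕ} (r : Fin n → ℕ) (i : Fin n) (t : ℕ) :
    ∑ j, Function.update r i t j + r i = ∑ j, r j + t := by
  rw [Finset.sum_update_of_mem (Finset.mem_univ i), ← Finset.add_sum_erase _ _ (Finset.mem_univ i),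
    Finset.sdiff_singleton_eq_erase]
  omega

/-- change the pair `(r i, s i)` -/
theorem change {n : ℕ} {x y r s : Fin n → ℕ}
    (h5 : ∀ i, r i + 2 * s i ≤ x i ∧ 2 * r i + s i ≤ y i) (i : Fin n) (t t' : ℕ)
    (hx : t + 2 * t' ≤ x i) (hy : 2 * t + t' ≤ y i) :
    ∃ r' s' : Fin n → ℕ, ∑ j, r' j + r i = ∑ j, r j + t ∧ ∑ j, s' j + s i = ∑ j, s j + t' ∧
      ∀ i, r' i + 2 * s' i ≤ x i ∧ 2 * r' i + s' i ≤ y i := by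
  refine ⟨Function.update r i t, Function.update s i t', sum_update_add _ _ _,
    sum_update_add _ _ _, fun j => ?_⟩
  by_cases hj : j = i
  · subst hj; simp; omega
  · simp [hj]; exact h5 j

theorem le_sum {n : ℕ} (r : Fin n → ℕ) (i : Fin n) : r i ≤ ∑ j, r j :=
  Finset.single_le_sum (f := r) (fun _ _ => Nat.zero_le _) (Finset.mem_univ i)

/-- `c`, `d` are nonzerodivisors for large `k`. -/
theorem Mem0.c_reg {n k α β γ : ℕ} {x y : Fin n → ℕ} (hk : 2 * n + 2 ≤ k)
    (h : Mem0 n k α β (γ + 1) x y) : Mem0 n k α β γ x y := by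
  by_contra h0
  obtain ⟨r, s, h1, h2, h3, h5⟩ := h.of_c h0
  have : ∃ i, 3 ≤ r i + s i := by
    by_contra! hc
    have h6 : ∑ i, (r i + s i) ≤ ∑ i : Fin n, 2 := Finset.sum_le_sum fun i _ => by
      have := hc i
      omega
    rw [Finset.sum_add_distrib] at h6
    simp at h6
    omega
  obtain ⟨i, hi⟩ := this
  have hi5 := h5 i
  have hr := le_sum r i
  have hs := le_sum s i
  have key : ∀ t t' m m' : ℕ, t + 2 * t' ≤ x i → 2 * t + t' ≤ y i → m + m' + t + t' = r i + s i + 1 →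
      4 * t + 6 * m ≤ 4 * r i + 4 → 4 * t' + 6 * m' ≤ 4 * s i + 4 → False := by
    intro t t' m m' hx hy ht hm hm'
    obtain ⟨r', s', e1, e2, e3⟩ := change h5 i t t' hx hy
    exact h0 ⟨m, 0, 0, m', 0, r', s', by omega, by omega, by omega, by omega, e3⟩
  by_cases c1 : 3 ≤ r i
  · exact key (r i - 2) (s i + 1) 2 0 (by omega) (by omega) (by omega) (by omega) (by omega)
  by_cases c2 : 3 ≤ s i
  · exact key (r i + 1) (s i - 2) 0 2 (by omega) (by omega) (by omega) (by omega) (by omega)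
  by_cases c3 : r i = 2
  · exact key (r i - 2) (s i + 1) 2 0 (by omega) (by omega) (by omega) (by omega) (by omega)
  · exact key (r i + 1) (s i - 2) 0 2 (by omega) (by omega) (by omega) (by omega) (by omega)

theorem Mem0.of_update_y {n k α β γ : ℕ} {x y : Fin n → ℕ} (i : Fin n)
    (h : Mem0 n k α β γ x (Function.update y i (y i + 1))) (hx : x i ≤ 1) (hy : 2 ≤ y i) :
    Mem0 n k α β γ x y := by
  obtain ⟨n1, n2, n3, n4, p, r, s, h1, h2, h3, h4, h5⟩ := h
  refine ⟨n1, n2, n3, n4, p, r, s, h1, h2, h3, h4, fun j => ?_⟩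
  have := h5 j
  by_cases hj : j = i
  · subst hj; simp at this; omega
  · simpa [hj] using this

theorem Mem0.of_update_x {n k α β γ : ℕ} {x y : Fin n → ℕ} (i : Fin n)
    (h : Mem0 n k α β γ (Function.update x i (x i + 1)) y) (hx : 2 ≤ x i) (hy : y i ≤ 1) :
    Mem0 n k α β γ x y := by
  obtain ⟨n1, n2, n3, n4, p, r, s, h1, h2, h3, h4, h5⟩ := h
  refine ⟨n1, n2, n3, n4, p, r, s, h1, h2, h3, h4, fun j => ?_⟩
  have := h5 j
  by_cases hj : j = i
  · subst hj; simp at this; omega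
  · simpa [hj] using this

/-- No socle for even `k`. -/
theorem Mem0.even {n k α β γ : ℕ} {x y : Fin n → ℕ} (hk : Even k)
    (hc : Mem0 n k α β (γ + 1) x y)
    (hx : ∀ i, Mem0 n k α β γ (Function.update x i (x i + 1)) y)
    (hy : ∀ i, Mem0 n k α β γ x (Function.update y i (y i + 1))) : Mem0 n k α β γ x y := by
  by_contra h0
  obtain ⟨r, s, h1, h2, h3, h5⟩ := hc.of_c h0
  have key : ∀ i t t' m m' : ℕ, ∀ hi : i < n, t + 2 * t' ≤ x ⟨i, hi⟩ → 2 * t + t' ≤ y ⟨i, hi⟩ →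
      m + m' + t + t' = r ⟨i, hi⟩ + s ⟨i, hi⟩ + 1 →
      4 * t + 6 * m ≤ 4 * r ⟨i, hi⟩ + 4 → 4 * t' + 6 * m' ≤ 4 * s ⟨i, hi⟩ + 4 → False := by
    intro i t t' m m' hi hx hy ht hm hm'
    obtain ⟨r', s', e1, e2, e3⟩ := change h5 ⟨i, hi⟩ t t' hx hy
    have hr := le_sum r ⟨i, hi⟩
    have hs := le_sum s ⟨i, hi⟩
    exact h0 ⟨m, 0, 0, m', 0, r', s', by omega, by omega, by omega, by omega, e3⟩
  have hpar : ∀ i, Even (r i + s i) := by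
    intro i
    have hi5 := h5 i
    have r1 : r i ≤ 1 := by
      by_contra hr
      exact key i (r i - 2) (s i + 1) 2 0 i.2 (by simp; omega) (by simp; omega) (by simp; omega)
        (by simp; omega) (by simp; omega)
    have s1 : s i ≤ 1 := by
      by_contra hr
      exact key i (r i + 1) (s i - 2) 0 2 i.2 (by simp; omega) (by simp; omega) (by simp; omega)
        (by simp; omega) (by simp; omega)
    by_contra hodd
    rw [Nat.not_even_iff_odd] at hodd
    have hor : (r i = 1 ∧ s i = 0) ∨ (r i = 0 ∧ s i = 1) := by
      obtain ⟨m, hm⟩ := hodd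
      omega
    rcases hor with ⟨e1, e2⟩ | ⟨e1, e2⟩
    · have : x i ≤ 1 := by
        by_contra hx2
        exact key i 0 1 1 0 i.2 (by simp; omega) (by simp; omega) (by simp; omega)
          (by simp; omega) (by simp)
      exact h0 ((hy i).of_update_y i this (by omega))
    · have : y i ≤ 1 := by
        by_contra hx2
        exact key i 1 0 0 1 i.2 (by simp; omega) (by simp; omega) (by simp; omega)
          (by simp) (by simp; omega)
      exact h0 ((hx i).of_update_x i (by omega) this)
  have : Even (∑ i, (r i + s i)) := Finset.even_sum _ fun i _ => hpar i
  rw [Finset.sum_add_distrib] at this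
  obtain ⟨a, ha⟩ := hk
  obtain ⟨b, hb⟩ := this
  omega

/-- the socle element for odd `k = 2 j + 1`, `j ≤ n`. -/
def se {n : ℕ} (j : ℕ) : Fin n → ℕ := fun i => if i.1 < j then 3 else 1
def so {n : ℕ} (j : ℕ) : Fin n → ℕ := fun i => if i.1 < j then 1 else 0

theorem sum_so {n j : ℕ} (hj : j ≤ n) : ∑ i : Fin n, so j i = j := by
  simp only [so, Finset.sum_boole]
  simp [Fin.card_filter_val_lt, hj]

theorem so_se {n j : ℕ} (i : Fin n) :
    so j i + 2 * so j i ≤ se j i ∧ 2 * so j i + so j i ≤ se j i := by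
  unfold so se
  split_ifs <;> simp

theorem odd_not {n j : ℕ} (hj : j ≤ n) :
    ¬ Mem0 n (2 * j + 1) (4 * j + 4) (4 * j + 4) 0 (se j) (se j) := by
  rintro ⟨n1, n2, n3, n4, p, r, s, h1, h2, h3, h4, h5⟩
  have hr : ∑ i, r i ≤ j := by
    rw [← sum_so hj]
    refine Finset.sum_le_sum fun i _ => ?_
    have := h5 i
    unfold so se at *
    split_ifs at * <;> omega
  have hs : ∑ i, s i ≤ j := by
    rw [← sum_so hj]
    refine Finset.sum_le_sum fun i _ => ?_
    have := h5 i
    unfold so se at *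
    split_ifs at * <;> omega
  by_cases a1 : n1 = 0 <;> by_cases a2 : n2 = 0 <;> by_cases a3 : n3 = 0 <;>
    by_cases a4 : n4 = 0 <;> omega

theorem odd_a {n j : ℕ} (hj : j ≤ n) :
    Mem0 n (2 * j + 1) (4 * j + 5) (4 * j + 4) 0 (se j) (se j) :=
  ⟨0, 1, 0, 0, 0, so j, so j, by rw [sum_so hj]; omega, by rw [sum_so hj]; omega,
    by rw [sum_so hj]; omega, by omega, so_se⟩

theorem odd_b {n j : ℕ} (hj : j ≤ n) :
    Mem0 n (2 * j + 1) (4 * j + 4) (4 * j + 5) 0 (se j) (se j) :=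
  ⟨0, 0, 1, 0, 0, so j, so j, by rw [sum_so hj]; omega, by rw [sum_so hj]; omega,
    by rw [sum_so hj]; omega, by omega, so_se⟩

theorem odd_c {n j : ℕ} (hj : j ≤ n) :
    Mem0 n (2 * j + 1) (4 * j + 4) (4 * j + 4) 1 (se j) (se j) :=
  ⟨0, 0, 0, 0, 1, so j, so j, by rw [sum_so hj]; omega, by rw [sum_so hj]; omega,
    by rw [sum_so hj]; omega, by omega, so_se⟩

theorem odd_x {n j : ℕ} (hj : j ≤ n) (i : Fin n) :
    Mem0 n (2 * j + 1) (4 * j + 4) (4 * j + 4) 0 (Function.update (se j) i (se j i + 1)) (se j) := by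
  have h5 : ∀ l : Fin n, so j l + 2 * so j l ≤ Function.update (se j) i (se j i + 1) l ∧
      2 * so j l + so j l ≤ se j l := by
    intro l
    have := so_se (j := j) l
    by_cases hl : l = i
    · subst hl; simp; omega
    · simpa [hl] using this
  have hs := sum_so hj
  by_cases h : i.1 < j
  · have e1 : so j i = 1 := by simp [so, h]
    have e2 : se j i = 3 := by simp [se, h]
    obtain ⟨r', s', q1, q2, q3⟩ := change h5 i 0 2 (by simp [e2]) (by simp [e2])
    have := le_sum (so j) i
    exact ⟨1, 0, 0, 0, 0, r', s', by omega, by omega, by omega, by omega, q3⟩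
  · have e1 : so j i = 0 := by simp [so, h]
    have e2 : se j i = 1 := by simp [se, h]
    obtain ⟨r', s', q1, q2, q3⟩ := change h5 i 0 1 (by simp [e2]) (by simp [e2])
    exact ⟨0, 0, 0, 0, 0, r', s', by omega, by omega, by omega, by omega, q3⟩

theorem Mem0.symm {n k α β γ : ℕ} {x y : Fin n → ℕ} (h : Mem0 n k α β γ x y) :
    Mem0 n k β α γ y x := by
  obtain ⟨n1, n2, n3, n4, p, r, s, h1, h2, h3, h4, h5⟩ := h
  exact ⟨n4, n3, n2, n1, p, s, r, by omega, by omega, by omega, h4, fun i => by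
    have := h5 i; omega⟩

theorem odd_y {n j : ℕ} (hj : j ≤ n) (i : Fin n) :
    Mem0 n (2 * j + 1) (4 * j + 4) (4 * j + 4) 0 (se j) (Function.update (se j) i (se j i + 1)) :=
  (odd_x hj i).symm

/-- the socle element modulo `c`, `d` -/
theorem big_not {n k : ℕ} (hk : 2 ≤ k) :
    ¬ Mem0 n k (6 * k - 6) 5 0 (fun _ => 1) (fun _ => 1) := by
  rintro ⟨n1, n2, n3, n4, p, r, s, h1, h2, h3, h4, h5⟩
  have hr : ∑ i, r i = 0 := Finset.sum_eq_zero fun i _ => by have := h5 i; dsimp only at this; omega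
  have hs : ∑ i, s i = 0 := Finset.sum_eq_zero fun i _ => by have := h5 i; dsimp only at this; omega
  omega

theorem big_a {n k : ℕ} (hk : 2 ≤ k) : Mem0 n k (6 * k - 5) 5 0 (fun _ => 1) (fun _ => 1) :=
  ⟨k - 1, 0, 1, 0, 0, 0, 0, by simp; omega, by simp; omega, by simp, by omega, by simp⟩

theorem big_b {n k : ℕ} (hk : 2 ≤ k) : Mem0 n k (6 * k - 6) 6 0 (fun _ => 1) (fun _ => 1) :=
  ⟨k - 1, 0, 0, 1, 0, 0, 0, by simp; omega, by simp; omega, by simp, by omega, by simp⟩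

theorem big_x {n k : ℕ} (hk : 2 ≤ k) (i : Fin n) :
    Mem0 n k (6 * k - 6) 5 0 (Function.update (fun _ => 1) i 2) (fun _ => 1) := by
  refine ⟨k - 1, 0, 0, 0, 0, 0, Pi.single i 1, by simp; omega, by simp; omega, by simp, by omega, ?_⟩
  intro j
  by_cases hj : j = i
  · subst hj; simp
  · simp [hj]

theorem big_y {n k : ℕ} (hk : 2 ≤ k) (i : Fin n) :
    Mem0 n k (6 * k - 6) 5 0 (fun _ => 1) (Function.update (fun _ => 1) i 2) := by
  refine ⟨k - 2, 0, 1, 0, 0, Pi.single i 1, 0, by simp; omega, by simp; omega, by simp, by omega, ?_⟩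
  intro j
  by_cases hj : j = i
  · subst hj; simp
  · simp [hj]
section General
open RingTheory.Sequence CategoryTheory Abelian Limits Pointwise
universe u
variable {R : Type u} [CommRing R]

theorem depth_zero {J : Ideal R} {M : Type*} [AddCommGroup M] [Module R M] (v : M) (hv : v ≠ 0)
    (h : ∀ r ∈ J, r • v = 0) : depthWrt J M = 0 := by
  unfold depthWrt
  rw [← nonpos_iff_eq_zero]
  refine sSup_le ?_
  rintro _ ⟨rs, rfl, hmem, hreg⟩
  cases rs with
  | nil => simp
  | cons r rs =>
    rw [isRegular_cons_iff] at hreg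
    exact (hv (hreg.1 (by simp [h r (hmem r List.mem_cons_self)]))).elim

theorem le_depth {J : Ideal R} {M : Type*} [AddCommGroup M] [Module R M] (rs : List R)
    (hmem : ∀ r ∈ rs, r ∈ J) (hreg : IsRegular M rs) (m : ℕ∞) (hm : (rs.length : ℕ∞) = m) :
    m ≤ depthWrt J M :=
  le_sSup ⟨rs, hm, hmem, hreg⟩

theorem one_le_depth [IsNoetherianRing R] {J : Ideal R} {M : Type*} [AddCommGroup M] [Module R M]
    [Module.Finite R M] (hJ : J • (⊤ : Submodule R M) ≠ ⊤)
    (h : ∀ v : M, (∀ r ∈ J, r • v = 0) → v = 0) : 1 ≤ depthWrt J M := by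
  have hs : Subsingleton ((R ⧸ J) →ₗ[R] M) := by
    refine subsingleton_of_forall_eq 0 fun f => ?_
    have h1 : f (Ideal.Quotient.mk J 1) = 0 := by
      refine h _ fun r hr => ?_
      rw [← map_smul]
      have : r • (Ideal.Quotient.mk J 1) = 0 := by
        rw [← Ideal.Quotient.mk_eq_mk, ← Submodule.Quotient.mk_smul, Submodule.Quotient.mk_eq_zero]
        simpa using hr
      rw [this, map_zero]
    ext
    exact h1
  obtain ⟨r, hr, hreg⟩ := IsSMulRegular.subsingleton_linearMap_iff.mp hs
  rw [Ideal.annihilator_quotient] at hr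
  refine le_depth [r] (by simpa using hr) ?_ 1 (by simp)
  refine ⟨by simpa [isWeaklyRegular_singleton_iff] using hreg, fun h0 => hJ ?_⟩
  refine eq_top_iff.2 (h0.le.trans ?_)
  refine Submodule.smul_mono_left ?_
  rw [Ideal.ofList_singleton, Ideal.span_singleton_le_iff_mem]
  exact hr

theorem smul_top_quot_ne {M : Type*} [AddCommGroup M]
    [Module R M] {I : Ideal R} {r : R} (hr : r ∈ I)
    (hI : I • (⊤ : Submodule R M) ≠ ⊤) :
    I • (⊤ : Submodule R (QuotSMulTop r M)) ≠ ⊤ := by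
  by_contra eq
  absurd congrArg (Submodule.comap (Submodule.mkQ _)) eq
  simpa [Submodule.comap_smul_top_of_surjective I _ (Submodule.mkQ_surjective _),
    Submodule.smul_mono_left ((Ideal.span_singleton_le_iff_mem I).mpr hr),
    ← Submodule.ideal_span_singleton_smul] using hI

theorem two_le_depth {J : Ideal R} {M : Type*} [AddCommGroup M] [Module R M]
    (hJ : J • (⊤ : Submodule R M) ≠ ⊤) {c d : R} (hc : c ∈ J) (hd : d ∈ J)
    (h1 : IsSMulRegular M c) (h2 : IsSMulRegular (QuotSMulTop c M) d) : 2 ≤ depthWrt J M := by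
  refine le_depth [c, d] (by simp [hc, hd]) ?_ 2 (by simp)
  refine ⟨?_, fun h0 => hJ ?_⟩
  · rw [isWeaklyRegular_cons_iff, isWeaklyRegular_singleton_iff]
    exact ⟨h1, h2⟩
  · refine eq_top_iff.2 (h0.le.trans ?_)
    refine Submodule.smul_mono_left ?_
    rw [Ideal.ofList, Ideal.span_le]
    rintro x hx
    simp at hx
    rcases hx with rfl | rfl <;> assumption

theorem step [IsNoetherianRing R] {J : Ideal R} {M : Type u} [AddCommGroup M] [Module R M]
    [Module.Finite R M] (hJ : J • (⊤ : Submodule R M) ≠ ⊤) {c : R} (hc : c ∈ J)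
    (h1 : IsSMulRegular M c) (rs : List R) (n : ℕ) (hn : n + 1 ≤ rs.length)
    (hmem : ∀ r ∈ rs, r ∈ J) (hreg : IsRegular M rs) :
    ∃ rs' : List R, rs'.length = n ∧ (∀ r ∈ rs', r ∈ J) ∧ IsRegular (QuotSMulTop c M) rs' := by
  have hsupp : Module.support R (ModuleCat.of R (R ⧸ J)) = PrimeSpectrum.zeroLocus J := by
    rw [Module.support_eq_zeroLocus, Ideal.annihilator_quotient]
  have hext := ModuleCat.subsingleton_ext_of_exists_isRegular J (ModuleCat.of R (R ⧸ J))
    hsupp.subset (ModuleCat.of R M) hJ.lt_top rs hmem hreg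
  refine ModuleCat.exists_isRegular_of_exists_subsingleton_ext J n
    (ModuleCat.of R (QuotSMulTop c M)) (smul_top_quot_ne hc hJ).lt_top
    (ModuleCat.of R (R ⧸ J)) hsupp ?_
  intro i hi
  have zero1 := AddCommGrpCat.isZero_of_iff_subsingleton.mpr (hext i (by omega))
  have zero2 := AddCommGrpCat.isZero_of_iff_subsingleton.mpr (hext (i + 1) (by omega))
  exact AddCommGrpCat.subsingleton_of_isZero <| ShortComplex.Exact.isZero_of_both_zeros
    ((Ext.covariant_sequence_exact₃' (ModuleCat.of R (R ⧸ J))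
      (IsSMulRegular.smulShortComplex_shortExact (M := ModuleCat.of R M) h1)) i (i + 1) rfl)
    (zero1.eq_zero_of_src _) (zero2.eq_zero_of_tgt _)

theorem depth_le_two [IsNoetherianRing R] {J : Ideal R} {M : Type u} [AddCommGroup M] [Module R M]
    [Module.Finite R M] (hJ : J • (⊤ : Submodule R M) ≠ ⊤) {c d : R} (hc : c ∈ J) (hd : d ∈ J)
    (h1 : IsSMulRegular M c) (h2 : IsSMulRegular (QuotSMulTop c M) d)
    (v : QuotSMulTop d (QuotSMulTop c M)) (hv : v ≠ 0) (h : ∀ r ∈ J, r • v = 0) :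
    depthWrt J M ≤ 2 := by
  refine sSup_le ?_
  rintro _ ⟨rs, rfl, hmem, hreg⟩
  by_contra hlt
  have h3 : 2 + 1 ≤ rs.length := by
    by_contra h4
    apply hlt
    have : rs.length ≤ 2 := by omega
    exact_mod_cast this
  obtain ⟨rs', hl', hmem', hreg'⟩ := step hJ hc h1 rs 2 h3 hmem hreg
  obtain ⟨rs2, hl2, hmem2, hreg2⟩ := step (smul_top_quot_ne hc hJ) hd h2 rs' 1 (by omega) hmem' hreg'
  cases rs2 with
  | nil => simp at hl2
  | cons r rs =>
    rw [isRegular_cons_iff] at hreg2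
    exact (hv (hreg2.1 (by simp [h r (hmem2 r List.mem_cons_self)]))).elim

theorem smul_top_quotient_ne {A J : Ideal R} (hA : A ≤ J) (hJ : J ≠ ⊤) :
    J • (⊤ : Submodule R (R ⧸ A)) ≠ ⊤ := by
  intro h
  have hle : J • (⊤ : Submodule R (R ⧸ A)) ≤ Submodule.map A.mkQ J := by
    rw [Submodule.smul_le]
    rintro r hr m -
    obtain ⟨s, rfl⟩ := A.mkQ_surjective m
    exact ⟨r * s, Ideal.mul_mem_right _ _ hr, by rw [← smul_eq_mul, map_smul]⟩
  rw [h] at hle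
  obtain ⟨j, hj, e⟩ := hle (Submodule.mem_top (x := A.mkQ 1))
  have : j - 1 ∈ A := by
    rw [Submodule.mkQ_apply, Submodule.mkQ_apply, Submodule.Quotient.eq] at e
    exact e
  apply hJ
  rw [Ideal.eq_top_iff_one]
  have := J.sub_mem hj (hA this)
  simpa using this

theorem ker_quot {N : Type*} [AddCommGroup N] [Module R N] {B : Ideal R} (π : R →ₗ[R] N)
    (hs : Function.Surjective π) (hk : ∀ p, π p = 0 ↔ p ∈ B) (c : R) (p : R) :
    ((c • (⊤ : Submodule R N)).mkQ ∘ₗ π) p = 0 ↔ p ∈ B ⊔ Ideal.span {c} := by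
  rw [LinearMap.comp_apply, Submodule.mkQ_apply, Submodule.Quotient.mk_eq_zero,
    Submodule.mem_smul_pointwise_iff_exists]
  constructor
  · rintro ⟨m, -, hm⟩
    obtain ⟨q, rfl⟩ := hs m
    rw [← map_smul, eq_comm, ← sub_eq_zero, ← map_sub, hk] at hm
    have := Ideal.add_mem (B ⊔ Ideal.span {c}) (Ideal.mem_sup_left hm)
      (Ideal.mem_sup_right (Ideal.mul_mem_right q _ (Ideal.mem_span_singleton_self c)))
    simpa using this
  · intro h
    obtain ⟨b, hb, z, hz, rfl⟩ := Submodule.mem_sup.mp h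
    obtain ⟨q, rfl⟩ := Ideal.mem_span_singleton'.mp hz
    refine ⟨π q, trivial, ?_⟩
    rw [map_add, (hk b).2 hb, zero_add, ← map_smul, smul_eq_mul, mul_comm]

theorem reg_of_ker {N : Type*} [AddCommGroup N] [Module R N] {B : Ideal R} (π : R →ₗ[R] N)
    (hs : Function.Surjective π) (hk : ∀ p, π p = 0 ↔ p ∈ B) (d : R)
    (h : ∀ p, d * p ∈ B → p ∈ B) : IsSMulRegular N d := by
  rw [isSMulRegular_iff_right_eq_zero_of_smul]
  intro m hm
  obtain ⟨q, rfl⟩ := hs m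
  rw [← map_smul, hk] at hm
  exact (hk _).2 (h _ hm)
end General
theorem mMax_le : mMax K n ≤ RingHom.ker (constantCoeff (R := K) (σ := Vars n)) := by
  unfold mMax
  rw [Ideal.span_le]
  rintro _ ⟨t, rfl⟩
  simp

theorem mMax_ne_top : mMax K n ≠ ⊤ := by
  rw [Ideal.ne_top_iff_one]
  intro h
  have := mMax_le K n h
  simp at this

theorem X_mem (t : Vars n) : (X t : MvPolynomial (Vars n) K) ∈ mMax K n :=
  Ideal.subset_span ⟨t, rfl⟩

theorem idealI_le : idealI K n ≤ mMax K n := by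
  have ha : va K n ∈ mMax K n := X_mem K n _
  have hb : vb K n ∈ mMax K n := X_mem K n _
  have hx : ∀ i, vx K n i ∈ mMax K n := fun i => X_mem K n _
  unfold idealI
  rw [Ideal.span_le]
  rintro f ((h | h) | h)
  · rcases h with rfl | rfl | rfl | rfl | rfl | rfl
    · exact Ideal.pow_mem_of_mem _ ha _ (by norm_num)
    · exact Ideal.mul_mem_left _ _ hb
    · exact Ideal.mul_mem_right _ _ ha
    · exact Ideal.pow_mem_of_mem _ hb _ (by norm_num)
    · exact Ideal.mul_mem_right _ _ (Ideal.mul_mem_right _ _ (Ideal.pow_mem_of_mem _ ha _ (by norm_num)))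
    · exact Ideal.mul_mem_right _ _ (Ideal.mul_mem_right _ _ (Ideal.pow_mem_of_mem _ ha _ (by norm_num)))
  · obtain ⟨i, rfl⟩ := h
    exact Ideal.mul_mem_right _ _ (Ideal.mul_mem_left _ _ (hx i))
  · obtain ⟨i, rfl⟩ := h
    exact Ideal.mul_mem_right _ _ (Ideal.mul_mem_right _ _ (Ideal.pow_mem_of_mem _ hb _ (by norm_num)))

theorem smul_top_ne {k : ℕ} (hk : 1 ≤ k) :
    mMax K n • (⊤ : Submodule (MvPolynomial (Vars n) K) (MvPolynomial (Vars n) K ⧸ idealI K n ^ k))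
      ≠ ⊤ :=
  smul_top_quotient_ne ((Ideal.pow_le_self (by omega)).trans (idealI_le K n)) (mMax_ne_top K n)

theorem forall_mMax {A : Ideal (MvPolynomial (Vars n) K)} {f : MvPolynomial (Vars n) K}
    (h : ∀ t, X t * f ∈ A) : ∀ r ∈ mMax K n, r * f ∈ A := by
  intro r hr
  unfold mMax at hr
  induction hr using Submodule.span_induction with
  | mem x hx => obtain ⟨t, rfl⟩ := hx; exact h t
  | zero => simp
  | add x y _ _ hx hy => rw [add_mul]; exact A.add_mem hx hy
  | smul a x _ hx => rw [smul_eq_mul, mul_assoc]; exact A.mul_mem_left _ hx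

theorem X_mul_monomial' (t : Vars n) (u : Vars n →₀ ℕ) :
    (X t * monomial u (1 : K)) = monomial (Finsupp.single t 1 + u) 1 := by
  rw [X, monomial_mul, one_mul]

theorem monomial_mem_iff (k : ℕ) (u : Vars n →₀ ℕ) :
    monomial u (1 : K) ∈ idealI K n ^ k ↔ MemU n k u := by
  classical
  rw [mem_pow_iff, support_monomial]
  simp

theorem memU_a {n k : ℕ} {u : Vars n →₀ ℕ} : MemU n k (Finsupp.single (Sum.inl 0) 1 + u) ↔
    Mem0 n k (u (Sum.inl 0) + 1) (u (Sum.inl 1)) (u (Sum.inl 2) + u (Sum.inl 3))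
    (fun i => u (Sum.inr (Sum.inl i))) (fun i => u (Sum.inr (Sum.inr i))) := by
  simp [MemU, add_comm]

theorem memU_b {n k : ℕ} {u : Vars n →₀ ℕ} : MemU n k (Finsupp.single (Sum.inl 1) 1 + u) ↔
    Mem0 n k (u (Sum.inl 0)) (u (Sum.inl 1) + 1) (u (Sum.inl 2) + u (Sum.inl 3))
    (fun i => u (Sum.inr (Sum.inl i))) (fun i => u (Sum.inr (Sum.inr i))) := by
  simp [MemU, add_comm]

theorem memU_c {n k : ℕ} {u : Vars n →₀ ℕ} : MemU n k (Finsupp.single (Sum.inl 2) 1 + u) ↔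
    Mem0 n k (u (Sum.inl 0)) (u (Sum.inl 1)) (u (Sum.inl 2) + u (Sum.inl 3) + 1)
    (fun i => u (Sum.inr (Sum.inl i))) (fun i => u (Sum.inr (Sum.inr i))) := by
  simp [MemU, add_comm, add_left_comm, add_assoc]

theorem memU_d {n k : ℕ} {u : Vars n →₀ ℕ} : MemU n k (Finsupp.single (Sum.inl 3) 1 + u) ↔
    Mem0 n k (u (Sum.inl 0)) (u (Sum.inl 1)) (u (Sum.inl 2) + u (Sum.inl 3) + 1)
    (fun i => u (Sum.inr (Sum.inl i))) (fun i => u (Sum.inr (Sum.inr i))) := by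
  simp [MemU, add_comm, add_left_comm, add_assoc]

theorem memU_x {n k : ℕ} {u : Vars n →₀ ℕ} (j : Fin n) :
    MemU n k (Finsupp.single (Sum.inr (Sum.inl j)) 1 + u) ↔
    Mem0 n k (u (Sum.inl 0)) (u (Sum.inl 1)) (u (Sum.inl 2) + u (Sum.inl 3))
    (Function.update (fun i => u (Sum.inr (Sum.inl i))) j (u (Sum.inr (Sum.inl j)) + 1))
    (fun i => u (Sum.inr (Sum.inr i))) := by
  have : (fun i => (Finsupp.single (Sum.inr (Sum.inl j)) 1 + u : Vars n →₀ ℕ) (Sum.inr (Sum.inl i))) =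
      Function.update (fun i => u (Sum.inr (Sum.inl i))) j (u (Sum.inr (Sum.inl j)) + 1) := by
    funext i
    by_cases hi : i = j
    · subst hi; simp [add_comm]
    · simp [hi, Ne.symm hi]
  rw [MemU, this]
  simp

theorem memU_y {n k : ℕ} {u : Vars n →₀ ℕ} (j : Fin n) :
    MemU n k (Finsupp.single (Sum.inr (Sum.inr j)) 1 + u) ↔
    Mem0 n k (u (Sum.inl 0)) (u (Sum.inl 1)) (u (Sum.inl 2) + u (Sum.inl 3))
    (fun i => u (Sum.inr (Sum.inl i)))
    (Function.update (fun i => u (Sum.inr (Sum.inr i))) j (u (Sum.inr (Sum.inr j)) + 1)) := by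
  have : (fun i => (Finsupp.single (Sum.inr (Sum.inr j)) 1 + u : Vars n →₀ ℕ) (Sum.inr (Sum.inr i))) =
      Function.update (fun i => u (Sum.inr (Sum.inr i))) j (u (Sum.inr (Sum.inr j)) + 1) := by
    funext i
    by_cases hi : i = j
    · subst hi; simp [add_comm]
    · simp [hi, Ne.symm hi]
  rw [MemU, this]
  simp

/-- build an exponent -/
def mk {n : ℕ} (α β : ℕ) (x y : Fin n → ℕ) : Vars n →₀ ℕ :=
  Finsupp.equivFunOnFinite.symm (Sum.elim ![α, β, 0, 0] (Sum.elim x y))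

theorem depth_odd (j : ℕ) (hj : j ≤ n) : depthFun K n (2 * j + 1) = 0 := by
  unfold depthFun
  have hu : ¬ MemU n (2 * j + 1) (mk (4 * j + 4) (4 * j + 4) (se j) (se j)) := odd_not hj
  refine depth_zero (Ideal.Quotient.mk _ (monomial (mk (4 * j + 4) (4 * j + 4) (se j) (se j)) 1)) ?_ ?_
  · rw [Ne, Ideal.Quotient.eq_zero_iff_mem, monomial_mem_iff]
    exact hu
  · have := forall_mMax K n (A := idealI K n ^ (2 * j + 1))
      (f := monomial (mk (4 * j + 4) (4 * j + 4) (se j) (se j)) 1) ?_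
    · intro r hr
      rw [← Ideal.Quotient.mk_eq_mk, ← Submodule.Quotient.mk_smul, Submodule.Quotient.mk_eq_zero]
      exact this r hr
    · intro t
      rw [X_mul_monomial', monomial_mem_iff]
      rcases t with t | t | t
      · fin_cases t
        · exact memU_a.2 (odd_a hj)
        · exact memU_b.2 (odd_b hj)
        · exact memU_c.2 (odd_c hj)
        · exact memU_d.2 (odd_c hj)
      · exact (memU_x t).2 (odd_x hj t)
      · exact (memU_y t).2 (odd_y hj t)

theorem memU_of_X_mul {k : ℕ} {p : MvPolynomial (Vars n) K} {t : Vars n}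
    (h : X t * p ∈ idealI K n ^ k) {u : Vars n →₀ ℕ} (hu : u ∈ p.support) :
    MemU n k (Finsupp.single t 1 + u) := by
  refine (mem_pow_iff K n k _).1 h _ ?_
  rw [mem_support_iff, coeff_X_mul]
  exact mem_support_iff.1 hu

theorem depth_even {k : ℕ} (hk : 1 ≤ k) (he : Even k) : 1 ≤ depthFun K n k := by
  refine one_le_depth (smul_top_ne K n hk) ?_
  intro v hv
  obtain ⟨p, rfl⟩ := Ideal.Quotient.mk_surjective v
  rw [Ideal.Quotient.eq_zero_iff_mem, mem_pow_iff]
  intro u hu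
  have h : ∀ t, MemU n k (Finsupp.single t 1 + u) := by
    intro t
    refine memU_of_X_mul K n (p := p) ?_ hu
    have := hv (X t) (X_mem K n t)
    rwa [← Ideal.Quotient.mk_eq_mk, ← Submodule.Quotient.mk_smul, Submodule.Quotient.mk_eq_zero] at this
  exact Mem0.even he (memU_c.1 (h _)) (fun i => (memU_x i).1 (h _)) (fun i => (memU_y i).1 (h _))

theorem c_reg_poly {k : ℕ} (hk : 2 * n + 2 ≤ k) (p : MvPolynomial (Vars n) K)
    (h : X (Sum.inl 2) * p ∈ idealI K n ^ k) : p ∈ idealI K n ^ k := by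
  rw [mem_pow_iff]
  intro u hu
  exact Mem0.c_reg hk (memU_c.1 (memU_of_X_mul K n h hu))

theorem mem_sup_c (k : ℕ) (p : MvPolynomial (Vars n) K) :
    p ∈ idealI K n ^ k ⊔ Ideal.span {X (Sum.inl 2)} ↔
      ∀ u ∈ p.support, MemU n k u ∨ 1 ≤ u (Sum.inl 2) := by
  have : (Ideal.span {X (Sum.inl 2)} : Ideal (MvPolynomial (Vars n) K)) =
      Ideal.span ((fun u => monomial u (1 : K)) '' {Finsupp.single (Sum.inl 2) 1}) := by
    rw [Set.image_singleton]; rfl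
  rw [this, idealI_pow_eq, ← Ideal.span_union, ← Set.image_union, mem_ideal_span_monomial_image]
  refine forall₂_congr fun u _ => ⟨?_, ?_⟩
  · rintro ⟨v, hv | hv, h⟩
    · exact Or.inl (MemU.mono hv h)
    · rw [Set.mem_singleton_iff] at hv
      subst hv
      exact Or.inr (by simpa using h (Sum.inl 2))
  · rintro (h | h)
    · exact ⟨u, Or.inl h, le_rfl⟩
    · exact ⟨_, Or.inr rfl, by simpa using h⟩

theorem mem_sup_cd (k : ℕ) (p : MvPolynomial (Vars n) K) :
    p ∈ idealI K n ^ k ⊔ Ideal.span {X (Sum.inl 2)} ⊔ Ideal.span {X (Sum.inl 3)} ↔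
      ∀ u ∈ p.support, MemU n k u ∨ 1 ≤ u (Sum.inl 2) ∨ 1 ≤ u (Sum.inl 3) := by
  have : (Ideal.span {X (Sum.inl 2)} : Ideal (MvPolynomial (Vars n) K)) =
      Ideal.span ((fun u => monomial u (1 : K)) '' {Finsupp.single (Sum.inl 2) 1}) := by
    rw [Set.image_singleton]; rfl
  have h' : (Ideal.span {X (Sum.inl 3)} : Ideal (MvPolynomial (Vars n) K)) =
      Ideal.span ((fun u => monomial u (1 : K)) '' {Finsupp.single (Sum.inl 3) 1}) := by
    rw [Set.image_singleton]; rfl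
  rw [this, h', idealI_pow_eq, ← Ideal.span_union, ← Set.image_union, ← Ideal.span_union,
    ← Set.image_union, mem_ideal_span_monomial_image]
  refine forall₂_congr fun u _ => ⟨?_, ?_⟩
  · rintro ⟨v, (hv | hv) | hv, h⟩
    · exact Or.inl (MemU.mono hv h)
    · rw [Set.mem_singleton_iff] at hv
      subst hv
      exact Or.inr (Or.inl (by simpa using h (Sum.inl 2)))
    · rw [Set.mem_singleton_iff] at hv
      subst hv
      exact Or.inr (Or.inr (by simpa using h (Sum.inl 3)))
  · rintro (h | h | h)
    · exact ⟨u, Or.inl (Or.inl h), le_rfl⟩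
    · exact ⟨_, Or.inl (Or.inr rfl), by simpa using h⟩
    · exact ⟨_, Or.inr rfl, by simpa using h⟩

theorem d_reg_poly {k : ℕ} (hk : 2 * n + 2 ≤ k) (p : MvPolynomial (Vars n) K)
    (h : X (Sum.inl 3) * p ∈ idealI K n ^ k ⊔ Ideal.span {X (Sum.inl 2)}) :
    p ∈ idealI K n ^ k ⊔ Ideal.span {X (Sum.inl 2)} := by
  rw [mem_sup_c] at h ⊢
  intro u hu
  have := h (Finsupp.single (Sum.inl 3) 1 + u) (by
    rw [mem_support_iff, coeff_X_mul]
    exact mem_support_iff.1 hu)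
  rcases this with h1 | h1
  · exact Or.inl (Mem0.c_reg hk (memU_d.1 h1))
  · right
    simpa using h1

open Pointwise in
theorem depth_big {k : ℕ} (hk : 2 * n + 2 ≤ k) : depthFun K n k = 2 := by
  have hk2 : 2 ≤ k := by omega
  have hs0 : Function.Surjective (idealI K n ^ k).mkQ := Submodule.mkQ_surjective _
  have hk0 : ∀ p, (idealI K n ^ k).mkQ p = 0 ↔ p ∈ idealI K n ^ k := fun p => by
    rw [Submodule.mkQ_apply, Submodule.Quotient.mk_eq_zero]
  have hc := reg_of_ker _ hs0 hk0 (X (Sum.inl 2)) (c_reg_poly K n hk)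
  have hk1 := ker_quot _ hs0 hk0 (X (Sum.inl 2))
  have hs1 := (Submodule.mkQ_surjective
    ((X (Sum.inl 2) : MvPolynomial (Vars n) K) •
      (⊤ : Submodule (MvPolynomial (Vars n) K) (MvPolynomial (Vars n) K ⧸ idealI K n ^ k)))).comp hs0
  have hd := reg_of_ker _ hs1 hk1 (X (Sum.inl 3)) (d_reg_poly K n hk)
  have hk3 := ker_quot _ hs1 hk1 (X (Sum.inl 3))
  have hu : ¬ MemU n k (mk (6 * k - 6) 5 (fun _ => 1) (fun _ => 1)) := big_not hk2
  apply le_antisymm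
  · refine depth_le_two (smul_top_ne K n (by omega)) (X_mem K n _) (X_mem K n _) hc hd
      (Submodule.mkQ _ (Submodule.mkQ _ ((idealI K n ^ k).mkQ
        (monomial (mk (6 * k - 6) 5 (fun _ => 1) (fun _ => 1)) 1)))) ?_ ?_
    · intro h0
      have h1 := (mem_sup_cd K n k _).1 ((hk3 _).1 h0) (mk (6 * k - 6) 5 (fun _ => 1) (fun _ => 1))
        (by classical rw [support_monomial]; simp)
      rcases h1 with h1 | h1 | h1
      · exact hu h1
      · exact absurd (show 1 ≤ 0 from h1) (by norm_num)
      · exact absurd (show 1 ≤ 0 from h1) (by norm_num)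
    · have := forall_mMax K n (A := idealI K n ^ k ⊔ Ideal.span {X (Sum.inl 2)} ⊔
          Ideal.span {X (Sum.inl 3)})
        (f := monomial (mk (6 * k - 6) 5 (fun _ => 1) (fun _ => 1)) 1) ?_
      · intro r hr
        rw [← map_smul, ← map_smul, ← map_smul]
        exact (hk3 _).2 (this r hr)
      · intro t
        have aux : ∀ {v : Vars n →₀ ℕ}, MemU n k v → monomial v (1 : K) ∈ idealI K n ^ k ⊔
            Ideal.span {X (Sum.inl 2)} ⊔ Ideal.span {X (Sum.inl 3)} := fun hv =>
          Ideal.mem_sup_left (Ideal.mem_sup_left ((monomial_mem_iff K n k _).2 hv))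
        rcases t with t | t | t
        · fin_cases t
          · rw [X_mul_monomial']
            refine aux (memU_a.2 ?_)
            refine (big_a hk2).mono ?_ le_rfl (Nat.zero_le _) (fun _ => le_rfl) (fun _ => le_rfl)
            show 6 * k - 5 ≤ 6 * k - 6 + 1
            omega
          · rw [X_mul_monomial']
            exact aux (memU_b.2 (big_b hk2))
          · exact Ideal.mem_sup_left (Ideal.mem_sup_right
              (Ideal.mul_mem_right _ _ (Ideal.mem_span_singleton_self _)))
          · exact Ideal.mem_sup_right (Ideal.mul_mem_right _ _ (Ideal.mem_span_singleton_self _))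
        · rw [X_mul_monomial']
          exact aux ((memU_x t).2 (big_x hk2 t))
        · rw [X_mul_monomial']
          exact aux ((memU_y t).2 (big_y hk2 t))
  · exact two_le_depth (smul_top_ne K n (by omega)) (X_mem K n _) (X_mem K n _) hc hd

/-- The depth function `f(k) = depth(S/Iᵏ)` has exactly `n` strict local maxima:
an integer `k ≥ 2` satisfies `f(k) > f(k-1)` and `f(k) > f(k+1)` if and only if `k` is
even and `2 ≤ k ≤ 2n`. -/
theorem strict_local_maxima_characterization (k : ℕ) (hk : 2 ≤ k) :
    (depthFun K n (k - 1) < depthFun K n k ∧ depthFun K n (k + 1) < depthFun K n k) ↔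
    (Even k ∧ k ≤ 2 * n) := by
  constructor
  · rintro ⟨h1, h2⟩
    by_cases hb : 2 * n + 2 ≤ k
    · rw [depth_big K n hb, depth_big K n (by omega)] at h2
      exact (lt_irrefl _ h2).elim
    · rcases Nat.even_or_odd k with he | ho
      · refine ⟨he, ?_⟩
        obtain ⟨m, hm⟩ := he
        omega
      · obtain ⟨j, rfl⟩ := ho
        rw [depth_odd K n j (by omega)] at h1
        exact (not_lt_bot h1).elim
  · rintro ⟨he, hle⟩
    have h1 := depth_even K n (k := k) (by omega) he
    obtain ⟨m, rfl⟩ := he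
    have e1 : m + m - 1 = 2 * (m - 1) + 1 := by omega
    have e2 : m + m + 1 = 2 * m + 1 := by omega
    rw [e1, e2, depth_odd K n (m - 1) (by omega), depth_odd K n m (by omega)]
    exact ⟨lt_of_lt_of_le zero_lt_one h1, lt_of_lt_of_le zero_lt_one h1⟩
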